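/- For every natural number n, there is a bijection between the set of perfect matchings of the 2n-element set Fin n ⊕ Fin n (equivalently, the fixed-point-free involutions of Fin n ⊕ Fin n, or the partitions of this set into two-element blocks) and the set of triples (S₁, S₂, w), where S₁ and S₂ are involutive permutations of Fin n and w is a bijection from the set of fixed points of S₁ to the set of fixed points of S₂. The bijection sends a matching D to the triple in which S₁ interchanges the endpoints of each block contained in the first copy of Fin n (fixing all other points), S₂ interchanges the endpoints of each block contained in the second copy (fixing all other points), and w records the blocks with one endpoint in each copy. In particular, the number of fixed points of S₁ equals the number of fixed points of S₂ for every matching D. -/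

import Mathlib

namespace BrauerAux

/-- Underlying function of the matching attached to a triple. -/
def fwd {n : ℕ} (S T : Equiv.Perm (Fin n))
    (w : {x : Fin n // S x = x} ≃ {x : Fin n // T x = x}) : Fin n ⊕ Fin n → Fin n ⊕ Fin n
  | Sum.inl i => if h : S i = i then Sum.inr (w ⟨i, h⟩).1 else Sum.inl (S i)
  | Sum.inr i => if h : T i = i then Sum.inl (w.symm ⟨i, h⟩).1 else Sum.inr (T i)

theorem fwd_invol {n : ℕ} (S T : Equiv.Perm (Fin n))
    (hS : ∀ x, S (S x) = x) (hT : ∀ x, T (T x) = x)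
    (w : {x : Fin n // S x = x} ≃ {x : Fin n // T x = x}) (x : Fin n ⊕ Fin n) :
    fwd S T w (fwd S T w x) = x := by
  rcases x with i | i
  · by_cases h : S i = i
    · have := (w ⟨i, h⟩).2
      simp [fwd, h, this]
    · have h' : ¬ i = S i := fun e => h e.symm
      simp [fwd, h, hS, h']
  · by_cases h : T i = i
    · have := (w.symm ⟨i, h⟩).2
      simp [fwd, h, this]
    · have h' : ¬ i = T i := fun e => h e.symm
      simp [fwd, h, hT, h']

theorem fwd_ne {n : ℕ} (S T : Equiv.Perm (Fin n))
    (w : {x : Fin n // S x = x} ≃ {x : Fin n // T x = x}) (x : Fin n ⊕ Fin n) :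
    fwd S T w x ≠ x := by
  rcases x with i | i
  · by_cases h : S i = i <;> simp [fwd, h]
  · by_cases h : T i = i <;> simp [fwd, h]

/-- The matching attached to a triple. -/
def toMatching (n : ℕ) (t : Σ S : {S : Equiv.Perm (Fin n) // ∀ x, S (S x) = x} ×
               {S : Equiv.Perm (Fin n) // ∀ x, S (S x) = x},
          ({x : Fin n // S.1.1 x = x} ≃ {x : Fin n // S.2.1 x = x})) :
    {D : Equiv.Perm (Fin n ⊕ Fin n) // (∀ x, D (D x) = x) ∧ ∀ x, D x ≠ x} :=
  ⟨⟨fwd t.1.1.1 t.1.2.1 t.2, fwd t.1.1.1 t.1.2.1 t.2,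
    fwd_invol _ _ t.1.1.2 t.1.2.2 _, fwd_invol _ _ t.1.1.2 t.1.2.2 _⟩,
    fwd_invol _ _ t.1.1.2 t.1.2.2 _, fwd_ne _ _ _⟩

/-- The first-row value, with default. -/
def getL {n : ℕ} (i : Fin n) : Fin n ⊕ Fin n → Fin n
  | Sum.inl j => j
  | Sum.inr _ => i

/-- The second-row value, with default. -/
def getR {n : ℕ} (i : Fin n) : Fin n ⊕ Fin n → Fin n
  | Sum.inr j => j
  | Sum.inl _ => i

theorem getL_fwd {n : ℕ} (S T : Equiv.Perm (Fin n))
    (w : {x : Fin n // S x = x} ≃ {x : Fin n // T x = x}) (i : Fin n) :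
    getL i (fwd S T w (Sum.inl i)) = S i := by
  by_cases h : S i = i <;> simp [fwd, h, getL]

theorem getR_fwd {n : ℕ} (S T : Equiv.Perm (Fin n))
    (w : {x : Fin n // S x = x} ≃ {x : Fin n // T x = x}) (i : Fin n) :
    getR i (fwd S T w (Sum.inr i)) = T i := by
  by_cases h : T i = i <;> simp [fwd, h, getR]

theorem toMatching_injective (n : ℕ) : Function.Injective (toMatching n) := by
  rintro ⟨⟨⟨S, hS⟩, ⟨T, hT⟩⟩, w⟩ ⟨⟨⟨S', hS'⟩, ⟨T', hT'⟩⟩, w'⟩ h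
  have key : ∀ x, fwd S T w x = fwd S' T' w' x := fun x =>
    congrArg (fun D => D.1 x) h
  have e1 : S = S' := by
    ext1 i
    rw [← getL_fwd S T w, ← getL_fwd S' T' w', key]
  have e2 : T = T' := by
    ext1 i
    rw [← getR_fwd S T w, ← getR_fwd S' T' w', key]
  subst e1 e2
  have e3 : w = w' := by
    ext1 ⟨i, hi⟩
    have := key (Sum.inl i)
    simp only [fwd, dif_pos hi] at this
    exact Subtype.ext (Sum.inr_injective this)
  subst e3
  rfl

theorem toMatching_surjective (n : ℕ) : Function.Surjective (toMatching n) := by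
  rintro ⟨D, hD, hne⟩
  have hS : ∀ i, getL (getL i (D (Sum.inl i))) (D (Sum.inl (getL i (D (Sum.inl i))))) = i := by
    intro i
    rcases h : D (Sum.inl i) with j | j
    · have := hD (Sum.inl i)
      rw [h] at this
      simp [getL, this]
    · simp [getL, h]
  have hT : ∀ i, getR (getR i (D (Sum.inr i))) (D (Sum.inr (getR i (D (Sum.inr i))))) = i := by
    intro i
    rcases h : D (Sum.inr i) with j | j
    · simp [getR, h]
    · have := hD (Sum.inr i)
      rw [h] at this
      simp [getR, this]
  have fL : ∀ i, getL i (D (Sum.inl i)) = i → D (Sum.inl i) = Sum.inr (getR i (D (Sum.inl i))) := by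
    intro i hi
    rcases h : D (Sum.inl i) with j | j
    · rw [h] at hi
      simp only [getL] at hi
      subst hi
      exact absurd h (hne _)
    · rfl
  have fR : ∀ i, getR i (D (Sum.inr i)) = i → D (Sum.inr i) = Sum.inl (getL i (D (Sum.inr i))) := by
    intro i hi
    rcases h : D (Sum.inr i) with j | j
    · rfl
    · rw [h] at hi
      simp only [getR] at hi
      subst hi
      exact absurd h (hne _)
  have gL : ∀ i, getL i (D (Sum.inl i)) = i →
      D (Sum.inr (getR i (D (Sum.inl i)))) = Sum.inl i := by
    intro i hi
    rw [← fL i hi, hD]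
  have gR : ∀ i, getR i (D (Sum.inr i)) = i →
      D (Sum.inl (getL i (D (Sum.inr i)))) = Sum.inr i := by
    intro i hi
    rw [← fR i hi, hD]
  let S : Equiv.Perm (Fin n) :=
    ⟨fun i => getL i (D (Sum.inl i)), fun i => getL i (D (Sum.inl i)), hS, hS⟩
  let T : Equiv.Perm (Fin n) :=
    ⟨fun i => getR i (D (Sum.inr i)), fun i => getR i (D (Sum.inr i)), hT, hT⟩
  let w : {x : Fin n // S x = x} ≃ {x : Fin n // T x = x} :=
    { toFun := fun x => ⟨getR x.1 (D (Sum.inl x.1)), by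
        change getR _ (D (Sum.inr _)) = _
        rw [gL x.1 x.2]; rfl⟩
      invFun := fun x => ⟨getL x.1 (D (Sum.inr x.1)), by
        change getL _ (D (Sum.inl _)) = _
        rw [gR x.1 x.2]; rfl⟩
      left_inv := fun x => Subtype.ext (by
        change getL _ (D (Sum.inr _)) = _
        rw [gL x.1 x.2]; rfl)
      right_inv := fun x => Subtype.ext (by
        change getR _ (D (Sum.inl _)) = _
        rw [gR x.1 x.2]; rfl) }
  refine ⟨⟨⟨⟨S, hS⟩, ⟨T, hT⟩⟩, w⟩, ?_⟩
  apply Subtype.ext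
  ext1 x
  change fwd S T w x = D x
  rcases x with i | i
  · by_cases h : S i = i
    · simp only [fwd, dif_pos h]
      exact (fL i h).symm
    · simp only [fwd, dif_neg h]
      change Sum.inl (getL i (D (Sum.inl i))) = _
      change ¬ getL i (D (Sum.inl i)) = i at h
      rcases h' : D (Sum.inl i) with j | j
      · rfl
      · rw [h'] at h
        exact absurd rfl h
  · by_cases h : T i = i
    · simp only [fwd, dif_pos h]
      exact (fR i h).symm
    · simp only [fwd, dif_neg h]
      change Sum.inr (getR i (D (Sum.inr i))) = _
      change ¬ getR i (D (Sum.inr i)) = i at h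
      rcases h' : D (Sum.inr i) with j | j
      · rw [h'] at h
        exact absurd rfl h
      · rfl

end BrauerAux

/-- For every natural number `n`, there is a bijection between the set
of perfect matchings of the `2n`-element set `Fin n ⊕ Fin n` (equivalently, the
fixed-point-free involutions `D` of `Fin n ⊕ Fin n`) and the set of triples
`(S₁, S₂, w)` where `S₁, S₂` are involutive permutations of `Fin n` and `w` is a
bijection from the fixed points of `S₁` to the fixed points of `S₂`.  The bijection
sends a matching `D` to the triple in which `S₁` interchanges the endpoints of each
block contained in the first copy of `Fin n` (fixing all other points), `S₂` does the
same for the second copy, and `w` records the blocks with one endpoint in each copy.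
In particular, the number of fixed points of `S₁` equals the number of fixed points of
`S₂` for every matching `D`. -/
theorem brauer_diagram_triple_parametrization (n : ℕ) :
    ∃ Φ : {D : Equiv.Perm (Fin n ⊕ Fin n) // (∀ x, D (D x) = x) ∧ ∀ x, D x ≠ x} ≃
        (Σ S : {S : Equiv.Perm (Fin n) // ∀ x, S (S x) = x} ×
               {S : Equiv.Perm (Fin n) // ∀ x, S (S x) = x},
          ({x : Fin n // S.1.1 x = x} ≃ {x : Fin n // S.2.1 x = x})),
      ∀ D : {D : Equiv.Perm (Fin n ⊕ Fin n) // (∀ x, D (D x) = x) ∧ ∀ x, D x ≠ x},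
        (∀ i j : Fin n, D.1 (Sum.inl i) = Sum.inl j → (Φ D).1.1.1 i = j) ∧
        (∀ i j : Fin n, D.1 (Sum.inl i) = Sum.inr j → (Φ D).1.1.1 i = i) ∧
        (∀ i j : Fin n, D.1 (Sum.inr i) = Sum.inr j → (Φ D).1.2.1 i = j) ∧
        (∀ i j : Fin n, D.1 (Sum.inr i) = Sum.inl j → (Φ D).1.2.1 i = i) ∧
        (∀ x : {x : Fin n // (Φ D).1.1.1 x = x},
          D.1 (Sum.inl x.1) = Sum.inr ((Φ D).2 x).1) ∧
        Nat.card {x : Fin n // (Φ D).1.1.1 x = x} =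
          Nat.card {x : Fin n // (Φ D).1.2.1 x = x} := by
  refine ⟨(Equiv.ofBijective (BrauerAux.toMatching n)
    ⟨BrauerAux.toMatching_injective n, BrauerAux.toMatching_surjective n⟩).symm, ?_⟩
  intro D
  obtain ⟨t, rfl⟩ := (Equiv.ofBijective (BrauerAux.toMatching n)
    ⟨BrauerAux.toMatching_injective n, BrauerAux.toMatching_surjective n⟩).surjective D
  rw [Equiv.symm_apply_apply]
  obtain ⟨⟨⟨S, hS⟩, ⟨T, hT⟩⟩, w⟩ := t
  change (∀ i j : Fin n, BrauerAux.fwd S T w (Sum.inl i) = Sum.inl j → S i = j) ∧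
    (∀ i j : Fin n, BrauerAux.fwd S T w (Sum.inl i) = Sum.inr j → S i = i) ∧
    (∀ i j : Fin n, BrauerAux.fwd S T w (Sum.inr i) = Sum.inr j → T i = j) ∧
    (∀ i j : Fin n, BrauerAux.fwd S T w (Sum.inr i) = Sum.inl j → T i = i) ∧
    (∀ x : {x : Fin n // S x = x}, BrauerAux.fwd S T w (Sum.inl x.1) = Sum.inr (w x).1) ∧
    Nat.card {x : Fin n // S x = x} = Nat.card {x : Fin n // T x = x}
  refine ⟨?_, ?_, ?_, ?_, ?_, Nat.card_congr w⟩
  · intro i j h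
    rw [← BrauerAux.getL_fwd S T w, h]; rfl
  · intro i j h
    rw [← BrauerAux.getL_fwd S T w, h]; rfl
  · intro i j h
    rw [← BrauerAux.getR_fwd S T w, h]; rfl
  · intro i j h
    rw [← BrauerAux.getR_fwd S T w, h]; rfl
  · intro x
    simp only [BrauerAux.fwd, dif_pos x.2]
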